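/- Let E, H be complex Hilbert spaces and G₀, D₀, G, D as in the standing setup. Then BD(G) = [{0}](1 − DG), i.e. BD(G) = {u ∈ D(G) : Gu ∈ D(D) and DGu = u}, and BD(D) = [{0}](1 − GD), i.e. BD(D) = {w ∈ D(D) : Dw ∈ D(G) and GDw = w}. -/

import Mathlib

open scoped ComplexInnerProductSpace
open Filter Topology Classical

noncomputable section

variable {E H : Type*}
  [NormedAddCommGroup E] [InnerProductSpace ℂ E] [CompleteSpace E]
  [NormedAddCommGroup H] [InnerProductSpace ℂ H] [CompleteSpace H]

/-- The operator `G := (−D₀)*`. -/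
def Gop (D₀ : H →ₗ.[ℂ] E) : E →ₗ.[ℂ] H := (-D₀).adjoint

/-- The operator `D := −(G₀)*`. -/
def Dop (G₀ : E →ₗ.[ℂ] H) : H →ₗ.[ℂ] E := -(G₀.adjoint)

/-- Pointwise application of `G`, defined to be `0` off the domain. -/
def Gap (D₀ : H →ₗ.[ℂ] E) (u : E) : H :=
  if h : u ∈ (Gop D₀).domain then Gop D₀ ⟨u, h⟩ else 0

/-- Pointwise application of `D`, defined to be `0` off the domain. -/
def Dap (G₀ : E →ₗ.[ℂ] H) (w : H) : E :=
  if h : w ∈ (Dop G₀).domain then Dop G₀ ⟨w, h⟩ else 0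

/-- The graph inner product of `D_G`: `⟪x,y⟫_E + ⟪Gx,Gy⟫_H`. -/
def innG (D₀ : H →ₗ.[ℂ] E) (x y : E) : ℂ := ⟪x, y⟫ + ⟪Gap D₀ x, Gap D₀ y⟫

/-- The graph inner product of `D_D`: `⟪x,y⟫_H + ⟪Dx,Dy⟫_E`. -/
def innD (G₀ : E →ₗ.[ℂ] H) (x y : H) : ℂ := ⟪x, y⟫ + ⟪Dap G₀ x, Dap G₀ y⟫

/-- The boundary data space `BD(G)`, the orthogonal complement of `D(G₀)` in `D_G`. -/
def BDG (G₀ : E →ₗ.[ℂ] H) (D₀ : H →ₗ.[ℂ] E) : Set E :=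
  {u | u ∈ (Gop D₀).domain ∧ ∀ v ∈ G₀.domain, innG D₀ u v = 0}

/-- The boundary data space `BD(D)`, the orthogonal complement of `D(D₀)` in `D_D`. -/
def BDD (G₀ : E →ₗ.[ℂ] H) (D₀ : H →ₗ.[ℂ] E) : Set H :=
  {w | w ∈ (Dop G₀).domain ∧ ∀ v ∈ D₀.domain, innD G₀ w v = 0}

section PartialLinearMaps

open LinearPMap

variable {R X Y : Type*} [Ring R] [AddCommGroup X] [Module R X] [AddCommGroup Y] [Module R Y]

theorem mem_graph_neg_iff {T : X →ₗ.[R] Y} {x : X} {y : Y} :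
    (x, y) ∈ (-T).graph ↔ (x, -y) ∈ T.graph := by
  rw [mem_graph_iff, mem_graph_iff]
  exact exists_congr fun _ => and_congr_right fun _ => neg_eq_iff_eq_neg

theorem le_neg_of_neg_le {T S : X →ₗ.[R] Y} (h : -T ≤ S) : T ≤ -S :=
  ⟨h.1, fun _ _ hxy => neg_eq_iff_eq_neg.1 (h.2 hxy)⟩

/-- The extension of a partially defined linear operator to a total function, with the junk
value `0` off the domain. It turns `Gap` and `Dap` into instances of one construction. -/
def extendByZero (T : X →ₗ.[R] Y) (x : X) : Y :=
  if h : x ∈ T.domain then T ⟨x, h⟩ else 0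

theorem extendByZero_of_mem {T : X →ₗ.[R] Y} {x : X} (hx : x ∈ T.domain) :
    extendByZero T x = T ⟨x, hx⟩ :=
  dif_pos hx

theorem extendByZero_eq_of_le {T S : X →ₗ.[R] Y} (hTS : T ≤ S) (x : T.domain) :
    extendByZero S x = T x :=
  (extendByZero_of_mem (hTS.1 x.2)).trans (hTS.2 rfl).symm

theorem mem_graph_iff_extendByZero {T : X →ₗ.[R] Y} {x : X} {y : Y} :
    (x, y) ∈ T.graph ↔ x ∈ T.domain ∧ extendByZero T x = y := by
  constructor
  · intro h
    obtain ⟨w, rfl, rfl⟩ := (mem_graph_iff _).1 h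
    exact ⟨w.2, extendByZero_of_mem w.2⟩
  · rintro ⟨hx, rfl⟩
    exact (mem_graph_iff _).2 ⟨⟨x, hx⟩, rfl, (extendByZero_of_mem hx).symm⟩

/-- The kernel `[{0}](1 - AS)` of `1 - AS` on its natural domain, the vectors `u ∈ D(S)` with
`Su ∈ D(A)`. -/
def kerOneSubComp (A : Y →ₗ.[R] X) (S : X →ₗ.[R] Y) : Set X :=
  {u | u ∈ S.domain ∧ extendByZero S u ∈ A.domain ∧ extendByZero A (extendByZero S u) = u}

end PartialLinearMaps

section BoundaryData

open LinearPMap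
open scoped InnerProductSpace

variable {𝕜 X Y : Type*} [RCLike 𝕜]
  [NormedAddCommGroup X] [InnerProductSpace 𝕜 X] [NormedAddCommGroup Y] [InnerProductSpace 𝕜 Y]

theorem mem_graph_adjoint_iff [CompleteSpace X] {T : X →ₗ.[𝕜] Y}
    (hT : Dense (T.domain : Set X)) {x : X} {y : Y} :
    (y, x) ∈ T†.graph ↔ ∀ v : T.domain, ⟪x, v⟫_𝕜 = ⟪y, T v⟫_𝕜 := by
  constructor
  · intro h v
    obtain ⟨w, rfl, rfl⟩ := (mem_graph_iff _).1 h
    exact adjoint_isFormalAdjoint hT w v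
  · intro h
    exact (mem_graph_iff _).2
      ⟨⟨y, mem_adjoint_domain_of_exists y ⟨x, h⟩⟩, rfl, adjoint_apply_eq hT _ h⟩

theorem mem_graph_neg_adjoint_iff [CompleteSpace X] {T : X →ₗ.[𝕜] Y}
    (hT : Dense (T.domain : Set X)) {x : X} {y : Y} :
    (y, x) ∈ (-T†).graph ↔ ∀ v : T.domain, ⟪x, v⟫_𝕜 + ⟪y, T v⟫_𝕜 = 0 := by
  simp only [mem_graph_neg_iff, mem_graph_adjoint_iff hT, inner_neg_left,
    neg_eq_iff_add_eq_zero]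

theorem adjoint_neg_eq_neg_adjoint [CompleteSpace X] {T : X →ₗ.[𝕜] Y}
    (hT : Dense (T.domain : Set X)) :
    (-T)† = -T† := by
  refine eq_of_eq_graph (Submodule.ext fun ⟨y, x⟩ => ?_)
  rw [mem_graph_adjoint_iff (T := -T) hT, mem_graph_neg_adjoint_iff hT]
  refine forall_congr' fun v => ?_
  rw [LinearPMap.neg_apply, inner_neg_right, eq_neg_iff_add_eq_zero]

theorem le_adjoint_symm [CompleteSpace X] [CompleteSpace Y] {T : X →ₗ.[𝕜] Y} {S : Y →ₗ.[𝕜] X}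
    (hT : Dense (T.domain : Set X)) (hS : Dense (S.domain : Set Y)) (h : T ≤ S†) : S ≤ T† := by
  refine IsFormalAdjoint.le_adjoint hT fun x y => ?_
  rw [h.2 (y := ⟨x, h.1 x.2⟩) rfl]
  exact adjoint_isFormalAdjoint hS _ y

/-- The boundary data space of an operator `S` relative to a restriction `T` of `S`: the
orthogonal complement of `D(T)` in `D(S)` for the graph inner product of `S`. -/
def boundaryData (T S : X →ₗ.[𝕜] Y) : Set X :=
  {u | u ∈ S.domain ∧ ∀ v ∈ T.domain, ⟪u, v⟫_𝕜 + ⟪extendByZero S u, extendByZero S v⟫_𝕜 = 0}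

/- Since `S` agrees with `T` on `D(T)`, orthogonality of `u` to `D(T)` in the graph inner product is
the family of equations defining `(Su, u) ∈ graph (-T†)`. -/
theorem boundaryData_eq_kerOneSubComp [CompleteSpace X] {T S : X →ₗ.[𝕜] Y}
    (hT : Dense (T.domain : Set X)) (hTS : T ≤ S) :
    boundaryData T S = kerOneSubComp (-T†) S := by
  refine Set.ext fun u => and_congr_right fun _ => ?_
  rw [← mem_graph_iff_extendByZero, mem_graph_neg_adjoint_iff hT]
  simp only [← extendByZero_eq_of_le hTS, Subtype.forall]

theorem bdg_eq_ker_one_sub_general [CompleteSpace X] [CompleteSpace Y]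
    {G₀ : X →ₗ.[𝕜] Y} {D₀ : Y →ₗ.[𝕜] X}
    (hG₀ : Dense (G₀.domain : Set X)) (hD₀ : Dense (D₀.domain : Set Y)) (hsub : G₀ ≤ (-D₀)†) :
    boundaryData G₀ (-D₀)† = kerOneSubComp (-G₀†) (-D₀)† ∧
      boundaryData D₀ (-G₀†) = kerOneSubComp (-D₀)† (-G₀†) := by
  have hsub' : D₀ ≤ -G₀† := le_neg_of_neg_le (le_adjoint_symm hG₀ hD₀ hsub)
  refine ⟨boundaryData_eq_kerOneSubComp hG₀ hsub, ?_⟩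
  rw [adjoint_neg_eq_neg_adjoint hD₀]
  exact boundaryData_eq_kerOneSubComp hD₀ hsub'

end BoundaryData

/-- `BD(G) = [{0}](1 − DG)` and `BD(D) = [{0}](1 − GD)`: an element `u ∈ D(G)` belongs to
`BD(G)` iff `Gu ∈ D(D)` and `DGu = u`, and `w ∈ D(D)` belongs to `BD(D)` iff `Dw ∈ D(G)` and
`GDw = w`. -/
theorem bdg_eq_ker_one_sub (G₀ : E →ₗ.[ℂ] H) (D₀ : H →ₗ.[ℂ] E)
    (hG₀dense : Dense (G₀.domain : Set E)) (hD₀dense : Dense (D₀.domain : Set H))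
    (hG₀closed : G₀.IsClosed) (hD₀closed : D₀.IsClosed)
    (hsub : G₀ ≤ Gop D₀) :
    BDG G₀ D₀ = {u | u ∈ (Gop D₀).domain ∧ Gap D₀ u ∈ (Dop G₀).domain ∧
        Dap G₀ (Gap D₀ u) = u} ∧
    BDD G₀ D₀ = {w | w ∈ (Dop G₀).domain ∧ Dap G₀ w ∈ (Gop D₀).domain ∧
        Gap D₀ (Dap G₀ w) = w} :=
  bdg_eq_ker_one_sub_general hG₀dense hD₀dense hsub
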